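/- Let D ⊆ ℕ be a set of positive integers such that for every n ≥ 1 there is a subset D_n ⊆ D of n elements none of which divides the least common multiple of the other members of D_n. Then the sequence of Riemann sum operators (R_n)_{n∈D} is strong sweeping out: for every ε > 0 there exists a measurable set E ⊆ 𝕋 with |E| < ε such that limsup_{n→∞, n∈D} R_n 𝟙_E(x) = 1 for almost every x and liminf_{n→∞, n∈D} R_n 𝟙_E(x) = 0 for almost every x. -/

import Mathlib

open MeasureTheory Filter Set

/-- The circle `𝕋 = ℝ/ℤ` with its Lebesgue (Haar) probability measure. -/
abbrev Circle1 := AddCircle (1 : ℝ)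

/-- The Riemann sum operator `R_n f(x) = (1/n) ∑_{k=0}^{n-1} f(x + k/n)`. -/
noncomputable def RiemannSum (n : ℕ) (f : Circle1 → ℝ) (x : Circle1) : ℝ :=
  (n : ℝ)⁻¹ * ∑ k ∈ Finset.range n, f (x + (((k : ℝ) / (n : ℝ) : ℝ) : Circle1))

/-! Say that finitely many averages sweep a set `E` if from almost every point one of them charges
`E` almost fully. Arbitrarily far out in `D` there are finitely many Riemann sums that sweep a set
of arbitrarily small measure. Indeed, let `L` be the least common multiple of an lcm-independent
set and `r` the part of its member `m` not shared with the other members; different `m` have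
different `r`, so we may discard those with small `r`. The residue modulo `r` of the index of the
arc of length `1 / L` containing a point is equidistributed by `R_m` and preserved by the other
averages, so the events that this residue lies in a fixed set of density about `δ` behave like
independent coordinates. The set of points in none of these events is charged at least `1 - δ` by
`R_m` from every point in the `m`-th event only. With `n` events, the set of points from which it
is charged that much is therefore larger than the set itself by a factor of order `n * δ`, and
finitely many random translates sweep almost every point at small cost.

Choose small sets `A 0, A 1, …` successively, `A k` being swept by averages further and further out
and the later sets being negligible for these averages. The points whose last `A k` has even `k`
form a set that is charged almost fully at the even stages and almost not at all at the odd ones. -/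

section

open ProbabilityTheory
open scoped ENNReal Topology

section LimsupLiminf

variable {ι β : Type*} [ConditionallyCompleteLinearOrder β] [DenselyOrdered β]
  {l : Filter ι} {u : ι → β} {b : β}

lemma limsup_eq_of_forall_lt_frequently_le [NoMinOrder β] (hle : ∀ i, u i ≤ b)
    (hfreq : ∀ a < b, ∃ᶠ i in l, a ≤ u i) : limsup u l = b := by
  obtain ⟨a₀, ha₀⟩ := exists_lt b
  have hbdd : IsBoundedUnder (· ≤ ·) l u := isBoundedUnder_of ⟨b, hle⟩
  have hcobdd : IsCoboundedUnder (· ≤ ·) l u := .of_frequently_ge (hfreq a₀ ha₀)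
  refine le_antisymm (limsup_le_of_le hcobdd (.of_forall hle)) (le_of_forall_lt fun a ha => ?_)
  obtain ⟨a', haa', ha'b⟩ := exists_between ha
  exact haa'.trans_le (le_limsup_of_frequently_le (hfreq a' ha'b) hbdd)

lemma liminf_eq_of_forall_gt_frequently_le [NoMaxOrder β] (hle : ∀ i, b ≤ u i)
    (hfreq : ∀ a > b, ∃ᶠ i in l, u i ≤ a) : liminf u l = b :=
  limsup_eq_of_forall_lt_frequently_le (β := βᵒᵈ) hle hfreq

end LimsupLiminf

section SweptSet

variable {ι α : Type*} [MeasurableSpace α] {κ : ι → Kernel α α} {c : ℝ} {E F : Set α}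

/-- The points at which the maximal function `sup_i κ i x E` reaches the level `c`. -/
def sweptSet (κ : ι → Kernel α α) (c : ℝ) (E : Set α) : Set α :=
  {x | ∃ i, c ≤ (κ i x).real E}

lemma sweptSet_eq_iUnion : sweptSet κ c E = ⋃ i, {x | c ≤ (κ i x).real E} := by
  ext x
  simp [sweptSet]

lemma measurableSet_sweptSet [Countable ι] (hE : MeasurableSet E) :
    MeasurableSet (sweptSet κ c E) := by
  rw [sweptSet_eq_iUnion]
  exact .iUnion fun i =>
    measurableSet_le measurable_const ((κ i).measurable_coe hE).ennreal_toReal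

lemma sweptSet_mono [∀ i, IsFiniteKernel (κ i)] (hEF : E ⊆ F) :
    sweptSet κ c E ⊆ sweptSet κ c F :=
  fun _ ⟨i, hi⟩ => ⟨i, hi.trans (measureReal_mono hEF)⟩

variable {μ : Measure α} [IsFiniteMeasure μ]

lemma mul_measureReal_le_of_bind_le {κ : Kernel α α} [IsFiniteKernel κ] (hκ : μ.bind κ ≤ μ)
    (hc : 0 ≤ c) (hE : MeasurableSet E) : c * μ.real {x | c ≤ (κ x).real E} ≤ μ.real E := by
  have hset : {x | c ≤ (κ x).real E} = {x | ENNReal.ofReal c ≤ κ x E} := by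
    ext x
    exact (ENNReal.ofReal_le_iff_le_toReal (measure_ne_top _ _)).symm
  have hmarkov : ENNReal.ofReal c * μ {x | c ≤ (κ x).real E} ≤ μ E :=
    calc ENNReal.ofReal c * μ {x | c ≤ (κ x).real E}
        ≤ ∫⁻ x, κ x E ∂μ := hset ▸ mul_meas_ge_le_lintegral (κ.measurable_coe hE) _
      _ = μ.bind κ E := (Measure.bind_apply hE κ.aemeasurable).symm
      _ ≤ μ E := hκ E
  simpa [Measure.real, hc] using ENNReal.toReal_mono (measure_ne_top _ _) hmarkov

lemma mul_measureReal_sweptSet_le [Fintype ι] [∀ i, IsFiniteKernel (κ i)]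
    (hκ : ∀ i, μ.bind (κ i) ≤ μ) (hc : 0 ≤ c) (hE : MeasurableSet E) :
    c * μ.real (sweptSet κ c E) ≤ Fintype.card ι * μ.real E :=
  calc c * μ.real (sweptSet κ c E)
      ≤ c * ∑ i, μ.real {x | c ≤ (κ i x).real E} := by
        rw [sweptSet_eq_iUnion]
        gcongr
        exact measureReal_iUnion_fintype_le _
    _ = ∑ i, c * μ.real {x | c ≤ (κ i x).real E} := Finset.mul_sum ..
    _ ≤ ∑ _i : ι, μ.real E :=
        Finset.sum_le_sum fun i _ => mul_measureReal_le_of_bind_le (hκ i) hc hE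
    _ = Fintype.card ι * μ.real E := by simp

end SweptSet

section EvenLastSet

variable {α : Type*} {A : ℕ → Set α} {k : ℕ}

/-- The points lying in some `A j` with `j > k`. -/
def tailUnion (A : ℕ → Set α) (k : ℕ) : Set α := ⋃ j ∈ Ioi k, A j

/-- The points for which the last `A k` containing them exists and has even index. -/
def evenLastSet (A : ℕ → Set α) : Set α := ⋃ k ∈ {k : ℕ | Even k}, A k \ tailUnion A k

lemma subset_tailUnion {j : ℕ} (hkj : k < j) : A j ⊆ tailUnion A k :=
  subset_biUnion_of_mem (u := A) hkj

lemma evenLastSet_subset_iUnion : evenLastSet A ⊆ ⋃ k, A k :=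
  iUnion₂_subset fun k _ => sdiff_subset.trans (subset_iUnion A k)

lemma sdiff_tailUnion_subset_evenLastSet (hk : Even k) : A k \ tailUnion A k ⊆ evenLastSet A :=
  subset_biUnion_of_mem (u := fun k => A k \ tailUnion A k) hk

lemma evenLastSet_inter_subset_tailUnion (hk : ¬Even k) :
    evenLastSet A ∩ A k ⊆ tailUnion A k := by
  rintro x ⟨hx, hxk⟩
  obtain ⟨j, hj, hxj, hx_tail⟩ := mem_iUnion₂.1 hx
  rcases lt_trichotomy j k with hjk | rfl | hkj
  · exact absurd (subset_tailUnion hjk hxk) hx_tail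
  · exact absurd hj hk
  · exact subset_tailUnion hkj hxj

end EvenLastSet

section Gluing

variable {ι α : Type*} [MeasurableSpace α] {κ : ι → Kernel α α} {l : Filter ι} {μ : Measure α}

/-- Averages `κ i` along a filter `l` are strong sweeping out if there are arbitrarily small sets
`E` for which `κ i x E` oscillates between `0` and `1` along `l` at almost every `x`. -/
def IsStrongSweepingOut (κ : ι → Kernel α α) (l : Filter ι) (μ : Measure α) : Prop :=
  ∀ ε : ℝ, 0 < ε → ∃ E : Set α, MeasurableSet E ∧ μ E < ENNReal.ofReal ε ∧
    (∀ᵐ x ∂μ, limsup (fun i => (κ i x).real E) l = 1) ∧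
    (∀ᵐ x ∂μ, liminf (fun i => (κ i x).real E) l = 0)

/-- The finitary form of sweeping out: finitely many `κ i`, with `i` arbitrarily far along `l`,
together charge an arbitrarily small set `A` almost fully from almost every point. -/
def HasSmallSweepingSets (κ : ι → Kernel α α) (l : Filter ι) (μ : Measure α) : Prop :=
  ∀ s ∈ l, ∀ δ ∈ Ioo (0 : ℝ) 1, ∀ ε > 0, ∃ S : Finset ι, (S : Set ι) ⊆ s ∧
    ∃ A : Set α, MeasurableSet A ∧ μ.real A ≤ ε ∧
      μ.real (sweptSet (fun i : S => κ i) (1 - δ) A)ᶜ ≤ δ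

variable {A : ℕ → Set α} {k : ℕ}

lemma measurableSet_tailUnion (hA : ∀ k, MeasurableSet (A k)) : MeasurableSet (tailUnion A k) :=
  .biUnion (to_countable _) fun j _ => hA j

lemma measurableSet_evenLastSet (hA : ∀ k, MeasurableSet (A k)) :
    MeasurableSet (evenLastSet A) :=
  .biUnion (to_countable _) fun k _ => (hA k).diff (measurableSet_tailUnion hA)

section ZeroOrProbability

variable {ν : Measure α} [IsZeroOrProbabilityMeasure ν] {δ : ℝ}

lemma one_sub_le_measureReal_evenLastSet (hk : Even k) (hA : 1 - δ ≤ ν.real (A k))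
    (htail : ν.real (tailUnion A k) ≤ δ) : 1 - 2 * δ ≤ ν.real (evenLastSet A) := by
  have hcover : ν.real (A k) ≤ ν.real (evenLastSet A) + ν.real (tailUnion A k) :=
    (measureReal_mono (sdiff_subset_iff.1 (sdiff_tailUnion_subset_evenLastSet hk))).trans
      ((measureReal_union_le _ _).trans_eq (add_comm _ _))
  linarith

lemma measureReal_evenLastSet_le (hk : ¬Even k) (hAm : MeasurableSet (A k))
    (hA : 1 - δ ≤ ν.real (A k)) (htail : ν.real (tailUnion A k) ≤ δ) :
    ν.real (evenLastSet A) ≤ 2 * δ := by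
  have hunion := measureReal_union_add_inter (μ := ν) (s := evenLastSet A) hAm
  have hinter := measureReal_mono (μ := ν) (evenLastSet_inter_subset_tailUnion (A := A) hk)
  have hone : ν.real (evenLastSet A ∪ A k) ≤ 1 := measureReal_le_one
  linarith

end ZeroOrProbability

lemma measureReal_iUnion_le_two_mul {c : ℕ → ℝ} (hc : ∀ k, c (k + 1) ≤ c k / 2)
    (hA : ∀ k, μ.real (A k) ≤ c k) [IsFiniteMeasure μ] : μ.real (⋃ k, A k) ≤ 2 * c 0 := by
  have hc_nonneg (k : ℕ) : 0 ≤ c k := measureReal_nonneg.trans (hA k)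
  have hc_le (k : ℕ) : c k ≤ c 0 * (1 / 2) ^ k := by
    induction k with
    | zero => simp
    | succ k ih =>
      rw [pow_succ]
      linarith [hc k]
  have hsum : HasSum (fun k : ℕ => c 0 * (1 / 2 : ℝ) ^ k) (c 0 * 2) :=
    hasSum_geometric_two.mul_left _
  have hvol : μ (⋃ k, A k) ≤ ENNReal.ofReal (2 * c 0) :=
    calc μ (⋃ k, A k) ≤ ∑' k, μ (A k) := measure_iUnion_le _
      _ ≤ ∑' k, ENNReal.ofReal (c 0 * (1 / 2) ^ k) := by
          refine ENNReal.tsum_le_tsum fun k => ?_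
          rw [← ofReal_measureReal]
          exact ENNReal.ofReal_le_ofReal ((hA k).trans (hc_le k))
      _ = ENNReal.ofReal (2 * c 0) := by
          rw [← ENNReal.ofReal_tsum_of_nonneg (fun k => (hc_nonneg k).trans (hc_le k))
            hsum.summable, hsum.tsum_eq, mul_comm]
  exact ENNReal.toReal_le_of_le_ofReal (by linarith [hc_nonneg 0]) hvol

lemma measureReal_tailUnion_le_two_mul {c : ℕ → ℝ} (hc : ∀ k, c (k + 1) ≤ c k / 2)
    (hA : ∀ k, μ.real (A k) ≤ c k) [IsFiniteMeasure μ] (k : ℕ) :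
    μ.real (tailUnion A k) ≤ 2 * c (k + 1) := by
  have hsub : tailUnion A k ⊆ ⋃ i, A (k + 1 + i) := by
    refine iUnion₂_subset fun j hj => ?_
    obtain ⟨i, rfl⟩ := Nat.exists_eq_add_of_le (Nat.succ_le_of_lt hj)
    exact subset_iUnion (fun i => A (k + 1 + i)) i
  exact (measureReal_mono hsub).trans
    (measureReal_iUnion_le_two_mul (c := fun i => c (k + 1 + i)) (fun i => hc _) fun i => hA _)

lemma exists_pos_seq_le_half {b : ℕ → ℝ → ℝ} (hb : ∀ k e, 0 < e → 0 < b k e) {ε : ℝ}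
    (hε : 0 < ε) : ∃ c : ℕ → ℝ, c 0 = ε ∧ (∀ k, 0 < c k) ∧ (∀ k, c (k + 1) ≤ c k / 2) ∧
      ∀ k, c (k + 1) ≤ b k (c k) := by
  let c : ℕ → ℝ := fun k => Nat.rec ε (fun k e => min (e / 2) (b k e)) k
  refine ⟨c, rfl, fun k => ?_, fun k => min_le_left _ _, fun k => min_le_right _ _⟩
  induction k with
  | zero => exact hε
  | succ k ih => exact lt_min (half_pos ih) (hb k _ ih)

-- Stage `k + 1` is chosen after `S k`, so its set can be made small relative to `(S k).card`.
lemma HasSmallSweepingSets.exists_seq [IsFiniteMeasure μ] (h : HasSmallSweepingSets κ l μ)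
    {s : ℕ → Set ι} (hs : ∀ k, s k ∈ l) {δ : ℕ → ℝ} (hδ : ∀ k, δ k ∈ Ioo 0 1) {ε : ℝ}
    (hε : 0 < ε) : ∃ (S : ℕ → Finset ι) (A : ℕ → Set α), (∀ k, (S k : Set ι) ⊆ s k) ∧
      (∀ k, MeasurableSet (A k)) ∧ μ.real (⋃ k, A k) ≤ ε ∧
      (∀ k, μ.real (sweptSet (fun i : S k => κ i) (1 - δ k) (A k))ᶜ ≤ δ k) ∧
      ∀ k, (S k).card * μ.real (tailUnion A k) ≤ δ k * δ k := by
  have hchoice (k : ℕ) (e : ℝ) : ∃ (S : Finset ι) (A : Set α), 0 < e → (S : Set ι) ⊆ s k ∧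
      MeasurableSet A ∧ μ.real A ≤ e ∧
      μ.real (sweptSet (fun i : S => κ i) (1 - δ k) A)ᶜ ≤ δ k := by
    rcases lt_or_ge 0 e with he | he
    · obtain ⟨S, hS, A, hA⟩ := h (s k) (hs k) (δ k) (hδ k) e he
      exact ⟨S, A, fun _ => ⟨hS, hA⟩⟩
    · exact ⟨∅, ∅, fun he' => absurd he' he.not_gt⟩
  choose S A hSA using hchoice
  obtain ⟨c, hc_zero, hc_pos, hc_half, hc_le⟩ := exists_pos_seq_le_half
    (b := fun k e => δ k * δ k / (2 * ((S k e).card + 1)))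
    (fun k e _ => by have := (hδ k).1; positivity) (half_pos hε)
  have hmain (k : ℕ) := hSA k (c k) (hc_pos k)
  have hAc (k : ℕ) : μ.real (A k (c k)) ≤ c k := (hmain k).2.2.1
  refine ⟨fun k => S k (c k), fun k => A k (c k), fun k => (hmain k).1, fun k => (hmain k).2.1,
    ?_, fun k => (hmain k).2.2.2, fun k => ?_⟩
  · linarith [measureReal_iUnion_le_two_mul hc_half hAc]
  · have htail := measureReal_tailUnion_le_two_mul hc_half hAc k
    have hck := (le_div_iff₀ (by positivity)).1 (hc_le k)
    calc (S k (c k)).card * μ.real (tailUnion (fun k => A k (c k)) k)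
        ≤ (S k (c k)).card * (2 * c (k + 1)) := by gcongr
      _ ≤ c (k + 1) * (2 * ((S k (c k)).card + 1)) := by linarith [hc_pos (k + 1)]
      _ ≤ δ k * δ k := hck

lemma ae_eventually_exists_sweeping [IsFiniteMeasure μ] [∀ i, IsFiniteKernel (κ i)]
    (hκ : ∀ i, μ.bind (κ i) ≤ μ) {S : ℕ → Finset ι} (hA : ∀ k, MeasurableSet (A k)) {δ : ℕ → ℝ}
    (hδ : ∀ k, 0 < δ k) (hδ_sum : Summable δ)
    (hswept : ∀ k, μ.real (sweptSet (fun i : S k => κ i) (1 - δ k) (A k))ᶜ ≤ δ k)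
    (htail : ∀ k, (S k).card * μ.real (tailUnion A k) ≤ δ k * δ k) :
    ∀ᵐ x ∂μ, ∀ᶠ k in atTop, ∃ i ∈ S k,
      1 - δ k ≤ (κ i x).real (A k) ∧ (κ i x).real (tailUnion A k) ≤ δ k := by
  let unswept (k : ℕ) : Set α := (sweptSet (fun i : S k => κ i) (1 - δ k) (A k))ᶜ
  let tailSwept (k : ℕ) : Set α := sweptSet (fun i : S k => κ i) (δ k) (tailUnion A k)
  have htailSwept (k : ℕ) : μ.real (tailSwept k) ≤ δ k := by
    refine le_of_mul_le_mul_left (le_trans ?_ (htail k)) (hδ k)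
    simpa using mul_measureReal_sweptSet_le (κ := fun i : S k => κ i) (fun i => hκ i) (hδ k).le
      (measurableSet_tailUnion hA)
  have hbad (k : ℕ) : μ (unswept k ∪ tailSwept k) ≤ ENNReal.ofReal (2 * δ k) := by
    rw [← ofReal_measureReal]
    refine ENNReal.ofReal_le_ofReal ((measureReal_union_le _ _).trans ?_)
    linarith [hswept k, htailSwept k]
  have hsum : ∑' k, μ (unswept k ∪ tailSwept k) ≠ ∞ := by
    refine ne_top_of_le_ne_top ?_ (ENNReal.tsum_le_tsum hbad)
    exact (hδ_sum.mul_left 2).tsum_ofReal_ne_top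
  filter_upwards [ae_eventually_notMem hsum] with x hx
  filter_upwards [hx] with k hk
  obtain ⟨hk_swept, hk_tail⟩ := not_or.1 hk
  obtain ⟨⟨i, hi⟩, hiA⟩ := not_not.1 hk_swept
  exact ⟨i, hi, hiA, (not_le.1 fun hle => hk_tail ⟨⟨i, hi⟩, hle⟩).le⟩

lemma frequently_of_frequently_exists_mem {s : ℕ → Set ι} (hs : l.HasAntitoneBasis s)
    {p : ι → Prop} (h : ∃ᶠ k in atTop, ∃ i ∈ s k, p i) : ∃ᶠ i in l, p i := by
  refine hs.toHasBasis.frequently_iff.2 fun {n} _ => ?_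
  obtain ⟨k, hnk, i, hi, hpi⟩ := frequently_atTop.1 h n
  exact ⟨i, hs.antitone hnk hi, hpi⟩

-- For even `k` the set `evenLastSet A` agrees with `A k` up to the negligible later stages, so
-- `κ i x` charges it almost fully; for odd `k` it avoids `A k` and so is hardly charged at all.
theorem HasSmallSweepingSets.isStrongSweepingOut [IsFiniteMeasure μ] [l.IsCountablyGenerated]
    [∀ i, IsZeroOrMarkovKernel (κ i)] (hκ : ∀ i, μ.bind (κ i) ≤ μ)
    (h : HasSmallSweepingSets κ l μ) : IsStrongSweepingOut κ l μ := by
  intro ε hε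
  obtain ⟨s, hs⟩ := l.exists_antitone_basis
  let δ (k : ℕ) : ℝ := (1 / 2) ^ (k + 1)
  have hδ (k : ℕ) : δ k ∈ Ioo 0 1 :=
    ⟨by positivity, pow_lt_one₀ (by norm_num) one_half_lt_one k.succ_ne_zero⟩
  have hδ_sum : Summable δ := (summable_nat_add_iff 1).2 summable_geometric_two
  have hδ_zero : Tendsto (fun k => 2 * δ k) atTop (𝓝 0) := by
    simpa using hδ_sum.tendsto_atTop_zero.const_mul 2
  obtain ⟨S, A, hSs, hAm, hAε, hswept, htail⟩ :=
    h.exists_seq hs.mem hδ (half_pos hε)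
  have hgood := ae_eventually_exists_sweeping hκ hAm (fun k => (hδ k).1) hδ_sum hswept htail
  refine ⟨evenLastSet A, measurableSet_evenLastSet hAm, ?_, ?_, ?_⟩
  · rw [← ofReal_measureReal, ENNReal.ofReal_lt_ofReal_iff hε]
    exact (measureReal_mono evenLastSet_subset_iUnion).trans_lt (hAε.trans_lt (half_lt_self hε))
  · filter_upwards [hgood] with x hx
    refine limsup_eq_of_forall_lt_frequently_le (fun i => measureReal_le_one) fun a ha => ?_
    refine frequently_of_frequently_exists_mem hs ?_
    have hsmall := hδ_zero.eventually_le_const (sub_pos.2 ha)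
    refine (Nat.frequently_even.and_eventually (hx.and hsmall)).mono ?_
    rintro k ⟨hk, ⟨i, hi, hiA, hi_tail⟩, hδk⟩
    exact ⟨i, hSs k hi, by linarith [one_sub_le_measureReal_evenLastSet hk hiA hi_tail]⟩
  · filter_upwards [hgood] with x hx
    refine liminf_eq_of_forall_gt_frequently_le (fun i => measureReal_nonneg) fun a ha => ?_
    refine frequently_of_frequently_exists_mem hs ?_
    have hsmall := hδ_zero.eventually_le_const ha
    refine (Nat.frequently_odd.and_eventually (hx.and hsmall)).mono ?_
    rintro k ⟨hk, ⟨i, hi, hiA, hi_tail⟩, hδk⟩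
    exact ⟨i, hSs k hi, (measureReal_evenLastSet_le (Nat.not_even_iff_odd.2 hk) (hAm k) hiA
      hi_tail).trans hδk⟩

end Gluing

section Translates

variable {G : Type*} [MeasurableSpace G] {μ : Measure G} [IsProbabilityMeasure μ]

lemma exists_measureReal_inter_preimage_add_le [Add G] [MeasurableAdd₂ G] [μ.IsAddLeftInvariant]
    {A B : Set G} (hA : MeasurableSet A) (hB : MeasurableSet B) :
    ∃ t : G, μ.real (A ∩ (· + t) ⁻¹' B) ≤ μ.real A * μ.real B := by
  let P : Set (G × G) := {p | p.2 ∈ A ∧ p.2 + p.1 ∈ B}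
  have hP : MeasurableSet P := (measurable_snd hA).inter ((measurable_snd.add measurable_fst) hB)
  have hfiber (y : G) : μ ((fun t => (t, y)) ⁻¹' P) = A.indicator (fun _ => μ B) y := by
    by_cases hy : y ∈ A
    · simpa [P, hy, preimage] using
        (measurePreserving_add_left μ y).measure_preimage hB.nullMeasurableSet
    · simp [P, hy]
  have haverage : ∫⁻ t, μ (A ∩ (· + t) ⁻¹' B) ∂μ = μ A * μ B :=
    calc ∫⁻ t, μ (A ∩ (· + t) ⁻¹' B) ∂μ = μ.prod μ P := (Measure.prod_apply hP).symm
      _ = ∫⁻ y, A.indicator (fun _ => μ B) y ∂μ := by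
          simp only [Measure.prod_apply_symm hP, hfiber]
      _ = μ A * μ B := by rw [lintegral_indicator_const hA, mul_comm]
  obtain ⟨t, ht⟩ := exists_le_lintegral (μ := μ)
    (measurable_measure_prodMk_left (ν := μ) hP).aemeasurable
  have ht' : μ (A ∩ (· + t) ⁻¹' B) ≤ μ A * μ B := ht.trans_eq haverage
  exact ⟨t, by simpa [Measure.real] using ENNReal.toReal_mono (by finiteness) ht'⟩

lemma exists_finset_measureReal_biInter_preimage_add_le [Add G] [MeasurableAdd₂ G]
    [μ.IsAddLeftInvariant] {B : Set G} (hB : MeasurableSet B) (n : ℕ) :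
    ∃ T : Finset G, T.card ≤ n ∧ μ.real (⋂ t ∈ T, (· + t) ⁻¹' B) ≤ μ.real B ^ n := by
  classical
  induction n with
  | zero => exact ⟨∅, by simp⟩
  | succ n ih =>
    obtain ⟨T, hT_card, hT⟩ := ih
    have hTm : MeasurableSet (⋂ t ∈ T, (· + t) ⁻¹' B) :=
      T.measurableSet_biInter fun t _ => measurable_add_const t hB
    obtain ⟨t, ht⟩ := exists_measureReal_inter_preimage_add_le (μ := μ) hTm hB
    refine ⟨insert t T, (T.card_insert_le t).trans (by lia), ?_⟩
    rw [Finset.set_biInter_insert, inter_comm, pow_succ]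
    exact ht.trans (by gcongr)

lemma exists_finset_measureReal_compl_biUnion_preimage_add_le [Add G] [MeasurableAdd₂ G]
    [μ.IsAddLeftInvariant] {B : Set G} (hB : MeasurableSet B) (hB_pos : 0 < μ.real B) {δ : ℝ}
    (hδ : δ ∈ Ioo 0 1) :
    ∃ T : Finset G, (T.card : ℝ) ≤ Real.log δ⁻¹ / μ.real B + 1 ∧
      μ.real (⋃ t ∈ T, (· + t) ⁻¹' B)ᶜ ≤ δ := by
  have hlog : 0 ≤ Real.log δ⁻¹ := Real.log_nonneg ((one_le_inv₀ hδ.1).2 hδ.2.le)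
  set n := ⌈Real.log δ⁻¹ / μ.real B⌉₊
  have hn : Real.log δ⁻¹ ≤ n * μ.real B := (div_le_iff₀ hB_pos).1 (Nat.le_ceil _)
  obtain ⟨T, hT_card, hT⟩ := exists_finset_measureReal_biInter_preimage_add_le (μ := μ) hB.compl n
  refine ⟨T, ?_, ?_⟩
  · calc (T.card : ℝ) ≤ n := mod_cast hT_card
      _ ≤ Real.log δ⁻¹ / μ.real B + 1 := (Nat.ceil_lt_add_one (by positivity)).le
  · calc μ.real (⋃ t ∈ T, (· + t) ⁻¹' B)ᶜ = μ.real (⋂ t ∈ T, (· + t) ⁻¹' Bᶜ) := by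
          simp only [compl_iUnion, preimage_compl]
      _ ≤ (1 - μ.real B) ^ n := by rwa [← probReal_compl_eq_one_sub hB]
      _ ≤ Real.exp (-μ.real B) ^ n := by
          gcongr
          · exact sub_nonneg.2 measureReal_le_one
          · exact Real.one_sub_le_exp_neg _
      _ = Real.exp (-(n * μ.real B)) := by rw [← Real.exp_nat_mul, mul_neg]
      _ ≤ Real.exp (-Real.log δ⁻¹) := by gcongr
      _ = δ := by rw [Real.log_inv, neg_neg, Real.exp_log hδ.1]

variable {ι : Type*} {κ : ι → Kernel G G}

lemma preimage_add_sweptSet [Add G] [MeasurableAdd₂ G]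
    (hκ : ∀ i x t, (κ i x).map (· + t) = κ i (x + t)) {c : ℝ} {E : Set G} (hE : MeasurableSet E)
    (t : G) : (· + t) ⁻¹' sweptSet κ c E = sweptSet κ c ((· + t) ⁻¹' E) := by
  ext x
  simp only [sweptSet, mem_preimage, mem_ofPred_eq, ← hκ,
    map_measureReal_apply (measurable_add_const t) hE]

-- Random translates of `sweptSet κ c E` cover almost everything once there are about
-- `log δ⁻¹ / μ (sweptSet κ c E)` of them, which costs only the same number of translates of `E`.
lemma exists_sweeping_set_of_mul_measureReal_le [AddGroup G] [MeasurableAdd₂ G]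
    [μ.IsAddLeftInvariant] [μ.IsAddRightInvariant] [Countable ι] [∀ i, IsFiniteKernel (κ i)]
    (hκ : ∀ i x t, (κ i x).map (· + t) = κ i (x + t)) {E : Set G} (hE : MeasurableSet E)
    (hE_pos : 0 < μ.real E) {c δ ε : ℝ} (hδ : δ ∈ Ioo 0 1) (hε : 0 < ε)
    (hswept : (Real.log δ⁻¹ + 1) / ε * μ.real E ≤ μ.real (sweptSet κ c E)) :
    ∃ A : Set G, MeasurableSet A ∧ μ.real A ≤ ε ∧ μ.real (sweptSet κ c A)ᶜ ≤ δ := by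
  have hlog : 0 ≤ Real.log δ⁻¹ := Real.log_nonneg ((one_le_inv₀ hδ.1).2 hδ.2.le)
  set g := μ.real (sweptSet κ c E)
  have hg_pos : 0 < g := lt_of_lt_of_le (by positivity) hswept
  have hg_le : g ≤ 1 := measureReal_le_one
  obtain ⟨T, hT_card, hT⟩ := exists_finset_measureReal_compl_biUnion_preimage_add_le (μ := μ)
    (measurableSet_sweptSet hE) hg_pos hδ
  refine ⟨⋃ t ∈ T, (· + t) ⁻¹' E,
    T.measurableSet_biUnion fun t _ => measurable_add_const t hE, ?_, ?_⟩
  · calc μ.real (⋃ t ∈ T, (· + t) ⁻¹' E)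
        ≤ ∑ t ∈ T, μ.real ((· + t) ⁻¹' E) := measureReal_biUnion_finset_le _ _
      _ = T.card * μ.real E := by simp [Measure.real, measure_preimage_add_right]
      _ ≤ (Real.log δ⁻¹ / g + 1) * μ.real E := by gcongr
      _ ≤ (Real.log δ⁻¹ / g + 1 / g) * μ.real E := by
          gcongr
          exact (one_le_div hg_pos).2 hg_le
      _ = (Real.log δ⁻¹ + 1) / ε * μ.real E * (ε / g) := by field_simp
      _ ≤ g * (ε / g) := by gcongr
      _ = ε := by field_simp
  · refine le_trans (measureReal_mono (compl_subset_compl.2 (iUnion₂_subset fun t ht => ?_))) hT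
    rw [preimage_add_sweptSet hκ hE]
    exact sweptSet_mono (subset_biUnion_of_mem (u := fun t => (· + t) ⁻¹' E) ht)

end Translates

section EquidistributedSystem

section AvoidingSet

variable {ι α : Type*} {U : ι → Set α}

/-- The points lying in none of the sets `U i` with `i ∈ T`. -/
def avoidingSet (U : ι → Set α) (T : Finset ι) : Set α := ⋂ i ∈ T, (U i)ᶜ

lemma pairwise_disjoint_avoidingSet_erase_inter [Fintype ι] [DecidableEq ι] :
    Pairwise (Function.onFun Disjoint fun i => avoidingSet U (Finset.univ.erase i) ∩ U i) := by
  refine fun i j hij => disjoint_left.2 ?_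
  rintro x ⟨-, hxi⟩ ⟨hxj, -⟩
  exact mem_iInter₂.1 hxj i (Finset.mem_erase.2 ⟨hij, Finset.mem_univ i⟩) hxi

end AvoidingSet

variable {ι α : Type*} [MeasurableSpace α] {μ : Measure α}

/-- Sets `U i` that behave like independent coordinate events for the averages `κ i`: averaging by
`κ i` gives `U i` the mass `η i` from every starting point, and does not see the other `U j`. -/
structure IsEquidistributedSystem (κ : ι → Kernel α α) (U : ι → Set α) (η : ι → ℝ) : Prop where
  measurableSet : ∀ i, MeasurableSet (U i)
  apply_self : ∀ i x, (κ i x).real (U i) = η i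
  ae_mem_iff : ∀ i j, i ≠ j → ∀ x, ∀ᵐ y ∂κ i x, y ∈ U j ↔ x ∈ U j

lemma measureReal_inter_of_invariant {κ : Kernel α α} [IsFiniteKernel κ] (hκ : κ.Invariant μ)
    {V W : Set α} (hV : MeasurableSet V) (hW : MeasurableSet W) {η : ℝ} (hη : 0 ≤ η)
    (hκV : ∀ x, (κ x).real V = η) (hκW : ∀ x, ∀ᵐ y ∂κ x, y ∈ W ↔ x ∈ W) :
    μ.real (W ∩ V) = η * μ.real W := by
  have hfiber (x : α) : κ x (W ∩ V) = W.indicator (fun _ => ENNReal.ofReal η) x := by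
    by_cases hx : x ∈ W
    · rw [indicator_of_mem hx, ← hκV x, ofReal_measureReal]
      refine measure_congr ?_
      filter_upwards [hκW x] with y hy
      exact propext (and_iff_right (hy.2 hx))
    · rw [indicator_of_notMem hx, measure_eq_zero_iff_ae_notMem]
      filter_upwards [hκW x] with y hy
      exact fun hyWV => hx (hy.1 hyWV.1)
  have hvol : μ (W ∩ V) = ENNReal.ofReal η * μ W :=
    calc μ (W ∩ V) = ∫⁻ x, κ x (W ∩ V) ∂μ := by
          rw [← Measure.bind_apply (hW.inter hV) κ.aemeasurable, hκ.def]
      _ = ENNReal.ofReal η * μ W := by simp only [hfiber, lintegral_indicator_const hW]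
  simp [Measure.real, hvol, hη]

namespace IsEquidistributedSystem

variable {κ : ι → Kernel α α} {U : ι → Set α} {η : ι → ℝ}

lemma measurableSet_avoidingSet (h : IsEquidistributedSystem κ U η) (T : Finset ι) :
    MeasurableSet (avoidingSet U T) :=
  T.measurableSet_biInter fun i _ => (h.measurableSet i).compl

lemma ae_mem_avoidingSet_iff (h : IsEquidistributedSystem κ U η) {T : Finset ι} {i : ι}
    (hi : i ∉ T) (x : α) : ∀ᵐ y ∂κ i x, y ∈ avoidingSet U T ↔ x ∈ avoidingSet U T := by
  have hT : ∀ᵐ y ∂κ i x, ∀ j ∈ T, y ∈ U j ↔ x ∈ U j :=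
    (Finset.eventually_all T).2 fun j hj =>
      h.ae_mem_iff i j (ne_of_mem_of_not_mem hj hi).symm x
  filter_upwards [hT] with y hy
  simp only [avoidingSet, mem_iInter, mem_compl_iff]
  exact forall₂_congr fun j hj => not_congr (hy j hj)

variable [∀ i, IsMarkovKernel (κ i)]

lemma apply_compl_self (h : IsEquidistributedSystem κ U η) (i : ι) (x : α) :
    (κ i x).real (U i)ᶜ = 1 - η i := by
  rw [probReal_compl_eq_one_sub (h.measurableSet i), h.apply_self]

lemma measureReal_avoidingSet_inter (h : IsEquidistributedSystem κ U η)
    (hκ : ∀ i, (κ i).Invariant μ) {T : Finset ι} {i : ι} (hi : i ∉ T) (hη : 0 ≤ η i) :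
    μ.real (avoidingSet U T ∩ U i) = η i * μ.real (avoidingSet U T) :=
  measureReal_inter_of_invariant (hκ i) (h.measurableSet i) (h.measurableSet_avoidingSet T) hη
    (h.apply_self i) (h.ae_mem_avoidingSet_iff hi)

lemma measureReal_avoidingSet_insert [DecidableEq ι] (h : IsEquidistributedSystem κ U η)
    (hκ : ∀ i, (κ i).Invariant μ) {T : Finset ι} {i : ι} (hi : i ∉ T) (hη : η i ≤ 1) :
    μ.real (avoidingSet U (insert i T)) = (1 - η i) * μ.real (avoidingSet U T) := by
  rw [avoidingSet, Finset.set_biInter_insert, inter_comm]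
  exact measureReal_inter_of_invariant (hκ i) (h.measurableSet i).compl
    (h.measurableSet_avoidingSet T) (sub_nonneg.2 hη) (h.apply_compl_self i)
    (h.ae_mem_avoidingSet_iff hi)

lemma measureReal_avoidingSet_pos [IsProbabilityMeasure μ] (h : IsEquidistributedSystem κ U η)
    (hκ : ∀ i, (κ i).Invariant μ) (hη : ∀ i, η i < 1) (T : Finset ι) :
    0 < μ.real (avoidingSet U T) := by
  classical
  induction T using Finset.induction_on with
  | empty => simp [avoidingSet]
  | insert i T hi ih =>
    rw [h.measureReal_avoidingSet_insert hκ hi (hη i).le]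
    exact mul_pos (sub_pos.2 (hη i)) ih

lemma avoidingSet_erase_inter_subset_sweptSet [Fintype ι] [DecidableEq ι]
    (h : IsEquidistributedSystem κ U η) {δ : ℝ} {i : ι} (hη : η i ≤ δ) :
    avoidingSet U (Finset.univ.erase i) ∩ U i ⊆
      sweptSet κ (1 - δ) (avoidingSet U Finset.univ) := by
  rintro x ⟨hx, -⟩
  have hae : avoidingSet U Finset.univ =ᵐ[κ i x] (U i)ᶜ := by
    filter_upwards [h.ae_mem_avoidingSet_iff (Finset.notMem_erase i _) x] with y hy
    have hy_mem := hy.2 hx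
    rw [← Finset.insert_erase (Finset.mem_univ i), avoidingSet, Finset.set_biInter_insert]
    exact propext (and_iff_left hy_mem)
  have hreal := (measureReal_congr hae).trans (h.apply_compl_self i x)
  exact ⟨i, by linarith⟩

-- From a point that lies in `U i` but in no other `U j`, the average `κ i` charges
-- `E = avoidingSet U univ` by `1 - η i`. These disjoint sets each have measure at least `a * μ E`.
lemma exists_card_mul_measureReal_le_sweptSet [Fintype ι] [IsProbabilityMeasure μ]
    (h : IsEquidistributedSystem κ U η) (hκ : ∀ i, (κ i).Invariant μ) {a δ : ℝ} (ha : 0 ≤ a)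
    (hη : ∀ i, η i ∈ Icc a δ) (hδ : δ < 1) :
    ∃ E : Set α, MeasurableSet E ∧ 0 < μ.real E ∧
      Fintype.card ι * a * μ.real E ≤ μ.real (sweptSet κ (1 - δ) E) := by
  classical
  let E := avoidingSet U Finset.univ
  let V (i : ι) : Set α := avoidingSet U (Finset.univ.erase i) ∩ U i
  have hV (i : ι) : a * μ.real E ≤ μ.real (V i) := by
    rw [h.measureReal_avoidingSet_inter hκ (Finset.notMem_erase i _) (ha.trans (hη i).1)]
    have hE_subset : E ⊆ avoidingSet U (Finset.univ.erase i) :=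
      biInter_subset_biInter_left fun j _ => Finset.mem_univ j
    exact mul_le_mul (hη i).1 (measureReal_mono hE_subset) measureReal_nonneg
      (ha.trans (hη i).1)
  refine ⟨E, h.measurableSet_avoidingSet _,
    h.measureReal_avoidingSet_pos hκ (fun i => (hη i).2.trans_lt hδ) _, ?_⟩
  calc Fintype.card ι * a * μ.real E = ∑ _i : ι, a * μ.real E := by simp [mul_assoc]
    _ ≤ ∑ i, μ.real (V i) := Finset.sum_le_sum fun i _ => hV i
    _ = μ.real (⋃ i, V i) := (measureReal_iUnion_fintype
        pairwise_disjoint_avoidingSet_erase_inter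
        fun i => (h.measurableSet_avoidingSet _).inter (h.measurableSet i)).symm
    _ ≤ μ.real (sweptSet κ (1 - δ) E) := measureReal_mono
        (iUnion_subset fun i => h.avoidingSet_erase_inter_subset_sweptSet (hη i).2)

end IsEquidistributedSystem

end EquidistributedSystem

section LcmIndependent

variable {F : Finset ℕ} {m m' : ℕ}

/-- No member of `F` divides the least common multiple of the other members. -/
def LcmIndependent (F : Finset ℕ) : Prop := ∀ m ∈ F, ¬m ∣ (F.erase m).lcm id

/-- The factor of `m` that is left after cancelling what `m` has in common with the least common
multiple of the other members of `F`. -/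
def privatePart (F : Finset ℕ) (m : ℕ) : ℕ := m / m.gcd ((F.erase m).lcm id)

lemma privatePart_dvd : privatePart F m ∣ m := Nat.div_dvd_of_dvd (Nat.gcd_dvd_left _ _)

lemma privatePart_dvd_privatePart {S : Finset ℕ} (hSF : S ⊆ F) :
    privatePart F m ∣ privatePart S m :=
  Nat.div_dvd_div_left (Nat.gcd_dvd_left _ _)
    (Nat.gcd_dvd_gcd_of_dvd_right _ (Finset.lcm_mono (Finset.erase_subset_erase m hSF)))

lemma lcm_eq_lcm_erase (hm : m ∈ F) : F.lcm id = m.lcm ((F.erase m).lcm id) := by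
  conv_lhs => rw [← Finset.insert_erase hm, Finset.lcm_insert]
  rfl

lemma privatePart_mul_lcm_erase (hm : m ∈ F) :
    privatePart F m * (F.erase m).lcm id = F.lcm id := by
  rw [lcm_eq_lcm_erase hm, Nat.lcm, privatePart,
    Nat.div_mul_right_comm (Nat.gcd_dvd_left _ _)]

lemma coprime_lcm_div_privatePart (hm : m ∈ F) (hm0 : 0 < m) :
    Nat.Coprime (F.lcm id / m) (privatePart F m) := by
  rw [lcm_eq_lcm_erase hm, Nat.lcm, Nat.mul_div_assoc _ (Nat.gcd_dvd_right _ _),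
    Nat.mul_div_cancel_left _ hm0]
  exact (Nat.coprime_div_gcd_div_gcd (Nat.gcd_pos_of_pos_left _ hm0)).symm

lemma privatePart_dvd_lcm_div (hm : m ∈ F) (hm' : m' ∈ F) (hne : m' ≠ m) :
    privatePart F m ∣ F.lcm id / m' := by
  refine Nat.dvd_div_of_mul_dvd ?_
  rw [← privatePart_mul_lcm_erase hm, mul_comm]
  exact mul_dvd_mul_left _ (Finset.dvd_lcm (f := id) (Finset.mem_erase.2 ⟨hne, hm'⟩))

namespace LcmIndependent

lemma ne_zero_of_ne (h : LcmIndependent F) (hm : m ∈ F) (hm' : m' ∈ F) (hne : m' ≠ m) :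
    m' ≠ 0 := by
  rintro rfl
  have hlcm : (F.erase m).lcm id = 0 :=
    Finset.lcm_eq_zero_iff.2 ⟨0, Finset.mem_erase.2 ⟨hne, hm'⟩, rfl⟩
  exact h m hm (hlcm ▸ dvd_zero m)

lemma zero_notMem (h : LcmIndependent F) (hF : 1 < F.card) : 0 ∉ F := by
  intro h0
  obtain ⟨m, hm, hm0⟩ := Finset.exists_mem_ne hF 0
  exact h.ne_zero_of_ne hm h0 hm0.symm rfl

lemma privatePart_ne_one (h : LcmIndependent F) (hm : m ∈ F) : privatePart F m ≠ 1 := by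
  intro hone
  have hgcd : m = m.gcd ((F.erase m).lcm id) :=
    (Nat.eq_of_dvd_of_div_eq_one (Nat.gcd_dvd_left _ _) hone).symm
  exact h m hm (Nat.gcd_eq_left_iff_dvd.1 hgcd.symm)

-- A common value divides `lcm F / m'` and is coprime to it.
lemma injOn_privatePart (h : LcmIndependent F) : InjOn (privatePart F) F := by
  intro m hm m' hm' heq
  by_contra hne
  have hcoprime := coprime_lcm_div_privatePart hm'
    (Nat.pos_of_ne_zero (h.ne_zero_of_ne hm hm' (Ne.symm hne)))
  exact h.privatePart_ne_one hm' (Nat.eq_one_of_dvd_coprimes hcoprime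
    (heq ▸ privatePart_dvd_lcm_div hm hm' (Ne.symm hne)) dvd_rfl)

lemma exists_subset_le_privatePart (h : LcmIndependent F) (h0 : 0 ∉ F) (r : ℕ) :
    ∃ S ⊆ F, F.card ≤ S.card + r ∧ ∀ m ∈ S, r ≤ privatePart S m := by
  let S := F.filter fun m => r ≤ privatePart F m
  have hS : S ⊆ F := Finset.filter_subset _ _
  refine ⟨S, hS, ?_, fun m hm => ?_⟩
  · have hrest : (F.filter fun m => ¬r ≤ privatePart F m).card ≤ (Finset.range r).card :=
      Finset.card_le_card_of_injOn (privatePart F)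
        (fun m hm => Finset.mem_coe.2 (Finset.mem_range.2
          (not_le.1 (Finset.mem_filter.1 hm).2)))
        (h.injOn_privatePart.mono (Finset.coe_subset.2 (Finset.filter_subset _ _)))
    rw [Finset.card_range] at hrest
    have hsplit := F.card_filter_add_card_filter_not fun m => r ≤ privatePart F m
    lia
  · have hm0 : 0 < m := Nat.pos_of_ne_zero (ne_of_mem_of_not_mem (hS hm) h0)
    exact (Finset.mem_filter.1 hm).2.trans (Nat.le_of_dvd
      (Nat.pos_of_dvd_of_pos privatePart_dvd hm0) (privatePart_dvd_privatePart hS))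

end LcmIndependent

end LcmIndependent

section ConvKernel

variable {G : Type*} [MeasurableSpace G] {μ ν : Measure G}

/-- The kernel of convolution with `ν`: it maps `x` to the translate of `ν` by `x`. -/
noncomputable def convKernel [Add G] [MeasurableAdd₂ G] (ν : Measure G) [SFinite ν] :
    Kernel G G where
  toFun x := ν.map (x + ·)
  measurable' := by
    refine Measure.measurable_of_measurable_coe _ fun E hE => ?_
    simp only [Measure.map_apply (measurable_const_add _) hE]
    exact measurable_measure_prodMk_left (measurable_add hE)

lemma convKernel_apply [Add G] [MeasurableAdd₂ G] [SFinite ν] (x : G) :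
    convKernel ν x = ν.map (x + ·) := rfl

instance [Add G] [MeasurableAdd₂ G] [IsProbabilityMeasure ν] : IsMarkovKernel (convKernel ν) where
  isProbabilityMeasure x :=
    Measure.isProbabilityMeasure_map (measurable_const_add x).aemeasurable

instance [Add G] [MeasurableAdd₂ G] [IsZeroOrProbabilityMeasure ν] :
    IsZeroOrMarkovKernel (convKernel ν) := by
  rcases eq_zero_or_isProbabilityMeasure ν with rfl | hν
  · refine ⟨.inl ?_⟩
    ext x
    simp [convKernel_apply]
  · infer_instance

lemma map_add_convKernel [AddCommSemigroup G] [MeasurableAdd₂ G] [SFinite ν] (x t : G) :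
    (convKernel ν x).map (· + t) = convKernel ν (x + t) := by
  rw [convKernel_apply, Measure.map_map (measurable_add_const t) (measurable_const_add x),
    convKernel_apply]
  congr 1
  ext y
  exact add_right_comm x y t

lemma bind_convKernel [Add G] [MeasurableAdd₂ G] [SFinite μ] [SFinite ν]
    [μ.IsAddRightInvariant] : μ.bind (convKernel ν) = ν univ • μ := by
  ext E hE
  let P : Set (G × G) := {p | p.1 + p.2 ∈ E}
  have hP : MeasurableSet P := measurable_add hE
  calc μ.bind (convKernel ν) E = ∫⁻ x, ν (Prod.mk x ⁻¹' P) ∂μ := by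
        rw [Measure.bind_apply hE (convKernel ν).aemeasurable]
        refine lintegral_congr fun x => ?_
        rw [convKernel_apply, Measure.map_apply (measurable_const_add x) hE]
        rfl
    _ = ∫⁻ y, μ ((· + y) ⁻¹' E) ∂ν :=
        (Measure.prod_apply hP).symm.trans (Measure.prod_apply_symm hP)
    _ = ∫⁻ _, μ E ∂ν := lintegral_congr fun y =>
        (measurePreserving_add_right μ y).measure_preimage hE.nullMeasurableSet
    _ = (ν univ • μ) E := by simp [mul_comm]

lemma bind_convKernel_le [Add G] [MeasurableAdd₂ G] [SFinite μ] [IsZeroOrProbabilityMeasure ν]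
    [μ.IsAddRightInvariant] : μ.bind (convKernel ν) ≤ μ := by
  rw [bind_convKernel]
  intro E
  simpa using mul_le_of_le_one_left' (prob_le_one (μ := ν) (s := univ))

lemma invariant_convKernel [Add G] [MeasurableAdd₂ G] [SFinite μ] [IsProbabilityMeasure ν]
    [μ.IsAddRightInvariant] : (convKernel ν).Invariant μ := by
  rw [Kernel.Invariant, bind_convKernel, measure_univ, one_smul]

end ConvKernel

section RiemannKernel

variable {n : ℕ} {x : Circle1} {E : Set Circle1}

instance : IsProbabilityMeasure (volume : Measure Circle1) := ⟨by simp⟩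

/-- The uniform probability measure on the `n`-torsion points `k / n` of the circle; it is the zero
measure for `n = 0`. -/
noncomputable def torsionMeasure (n : ℕ) : Measure Circle1 :=
  (n : ℝ≥0∞)⁻¹ • ∑ k ∈ Finset.range n, Measure.dirac (((k : ℝ) / (n : ℝ) : ℝ) : Circle1)

lemma torsionMeasure_zero : torsionMeasure 0 = 0 := by simp [torsionMeasure]

instance [NeZero n] : IsProbabilityMeasure (torsionMeasure n) :=
  ⟨by simp [torsionMeasure, ENNReal.inv_mul_cancel, NeZero.ne n]⟩

instance : IsZeroOrProbabilityMeasure (torsionMeasure n) := by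
  rcases eq_or_ne n 0 with rfl | hn
  · rw [torsionMeasure_zero]
    infer_instance
  · have : NeZero n := ⟨hn⟩
    infer_instance

lemma ae_torsionMeasure {p : Circle1 → Prop}
    (hp : ∀ k < n, p (((k : ℝ) / (n : ℝ) : ℝ) : Circle1)) : ∀ᵐ y ∂torsionMeasure n, p y := by
  refine Measure.ae_smul_measure ?_ _
  simp only [ae_iff, Measure.finsetSum_apply, Finset.sum_eq_zero_iff, Finset.mem_range]
  intro k hk
  rw [← ae_iff, ae_dirac_eq]
  exact hp k hk

lemma torsionMeasure_real_apply (hE : MeasurableSet E) :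
    (torsionMeasure n).real E = (n : ℝ)⁻¹ *
      ∑ k ∈ Finset.range n, E.indicator (fun _ => 1) (((k : ℝ) / (n : ℝ) : ℝ) : Circle1) := by
  have hdirac (y : Circle1) : (Measure.dirac y E).toReal = E.indicator (fun _ => 1) y := by
    by_cases hy : y ∈ E <;> simp [hE, hy]
  rw [torsionMeasure, measureReal_ennreal_smul_apply, ENNReal.toReal_inv, ENNReal.toReal_natCast,
    Measure.real, Measure.finsetSum_apply, ENNReal.toReal_sum fun k _ => measure_ne_top _ _]
  simp only [hdirac]

/-- The kernel whose averages are the Riemann sums `R_n`. -/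
noncomputable abbrev riemannKernel (n : ℕ) : Kernel Circle1 Circle1 := convKernel (torsionMeasure n)

lemma riemannKernel_apply : riemannKernel n x = (torsionMeasure n).map (x + ·) := rfl

lemma riemannSum_indicator (hE : MeasurableSet E) :
    RiemannSum n (E.indicator fun _ => 1) x = (riemannKernel n x).real E := by
  rw [riemannKernel_apply, map_measureReal_apply (measurable_const_add x) hE,
    torsionMeasure_real_apply (measurable_const_add x hE)]
  rfl

lemma ae_riemannKernel {p : Circle1 → Prop} (hpm : MeasurableSet {y | p y})
    (hp : ∀ k < n, p (x + (((k : ℝ) / (n : ℝ) : ℝ) : Circle1))) :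
    ∀ᵐ y ∂riemannKernel n x, p y :=
  (ae_map_iff (measurable_const_add x).aemeasurable hpm).2 (ae_torsionMeasure hp)

end RiemannKernel

section CircleResidue

variable {L m r : ℕ}

lemma periodic_floor_natCast_mul (h : r ∣ L) :
    Function.Periodic (fun t : ℝ => (⌊(L : ℝ) * t⌋ : ZMod r)) 1 := by
  intro t
  simp [mul_add, (ZMod.natCast_eq_zero_iff L r).2 h]

/-- The residue modulo `r` of the index of the arc `[j / L, (j + 1) / L)` containing a point. -/
noncomputable def circleResidue (h : r ∣ L) : Circle1 → ZMod r :=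
  (periodic_floor_natCast_mul h).lift

lemma circleResidue_coe (h : r ∣ L) (t : ℝ) :
    circleResidue h (t : Circle1) = (⌊(L : ℝ) * t⌋ : ZMod r) := rfl

lemma measurableSet_circleResidue_preimage (h : r ∣ L) (C : Set (ZMod r)) :
    MeasurableSet (circleResidue h ⁻¹' C) := by
  refine measurableSet_quotient.2 ?_
  have hfloor : Measurable fun t : ℝ => ⌊(L : ℝ) * t⌋ :=
    Int.measurable_floor.comp (measurable_const_mul _)
  exact hfloor (MeasurableSet.of_discrete (s := {z : ℤ | (z : ZMod r) ∈ C}))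

lemma circleResidue_add_div (h : r ∣ L) (hm : 0 < m) (hmL : m ∣ L) (x : Circle1) (k : ℕ) :
    circleResidue h (x + (((k : ℝ) / (m : ℝ) : ℝ) : Circle1)) =
      circleResidue h x + (L / m : ℕ) * k := by
  induction x using QuotientAddGroup.induction_on with
  | H t =>
    have hmul : (L : ℝ) * (t + k / m) = L * t + ((L / m : ℕ) * k : ℤ) := by
      obtain ⟨a, rfl⟩ := hmL
      rw [Nat.mul_div_cancel_left _ hm]
      push_cast
      field_simp
    rw [← AddCircle.coe_add, circleResidue_coe, circleResidue_coe, hmul, Int.floor_add_intCast]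
    rw [Int.cast_add, Int.cast_mul, Int.cast_natCast, Int.cast_natCast]

lemma ae_circleResidue_eq (h : r ∣ L) (hmL : m ∣ L) (hr : r ∣ L / m) (x : Circle1) :
    ∀ᵐ y ∂riemannKernel m x, circleResidue h y = circleResidue h x := by
  refine ae_riemannKernel (measurableSet_circleResidue_preimage h {circleResidue h x})
    fun k hk => ?_
  rw [circleResidue_add_div h (Nat.zero_lt_of_lt hk) hmL, (ZMod.natCast_eq_zero_iff _ r).2 hr,
    zero_mul, add_zero]

lemma sum_range_natCast_zmod {M : Type*} [AddCommMonoid M] [NeZero r] (f : ZMod r → M) :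
    ∑ k ∈ Finset.range r, f k = ∑ z, f z :=
  Finset.sum_bij' (fun k _ => (k : ZMod r)) (fun z _ => z.val) (fun _ _ => Finset.mem_univ _)
    (fun z _ => Finset.mem_range.2 z.val_lt)
    (fun _ hk => ZMod.val_cast_of_lt (Finset.mem_range.1 hk))
    (fun z _ => ZMod.natCast_zmod_val z) fun _ _ => rfl

lemma sum_range_mul_natCast_zmod {M : Type*} [AddCommMonoid M] [NeZero r] (f : ZMod r → M)
    (g : ℕ) : ∑ k ∈ Finset.range (r * g), f k = g • ∑ z, f z := by
  induction g with
  | zero => simp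
  | succ g ih =>
    rw [mul_add, mul_one, Finset.sum_range_add, ih, succ_nsmul, ← sum_range_natCast_zmod f]
    simp

lemma sum_indicator_add_unit_mul [NeZero r] (C : Finset (ZMod r)) (a : ZMod r) (u : (ZMod r)ˣ) :
    ∑ z : ZMod r, (C : Set (ZMod r)).indicator (fun _ => (1 : ℝ)) (a + u * z) = C.card :=
  calc ∑ z : ZMod r, (C : Set (ZMod r)).indicator (fun _ => (1 : ℝ)) (a + u * z)
      = ∑ z : ZMod r, (C : Set (ZMod r)).indicator (fun _ => (1 : ℝ)) z :=
        Equiv.sum_comp (u.mulLeft.trans (Equiv.addLeft a)) _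
    _ = C.card := by simp [indicator_apply]

lemma riemannKernel_real_circleResidue_preimage (hm : 0 < m) (hrm : r ∣ m) (hmL : m ∣ L)
    (hcoprime : Nat.Coprime (L / m) r) (C : Finset (ZMod r)) (x : Circle1) :
    (riemannKernel m x).real (circleResidue (hrm.trans hmL) ⁻¹' C) = C.card / r := by
  have : NeZero r := ⟨(Nat.pos_of_dvd_of_pos hrm hm).ne'⟩
  have hr0 : (r : ℝ) ≠ 0 := NeZero.ne _
  have hm0 : (m : ℝ) ≠ 0 := mod_cast hm.ne'
  set Φ := circleResidue (hrm.trans hmL)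
  let f (z : ZMod r) : ℝ := (C : Set (ZMod r)).indicator (fun _ => 1) (Φ x + (L / m : ℕ) * z)
  have hsum : ∑ z, f z = C.card := by
    simpa [f] using sum_indicator_add_unit_mul C (Φ x) (ZMod.unitOfCoprime _ hcoprime)
  have hshift (k : ℕ) : (Φ ⁻¹' C).indicator (fun _ => (1 : ℝ))
      (x + (((k : ℝ) / (m : ℝ) : ℝ) : Circle1)) = f k := by
    simp only [f, Φ, ← circleResidue_add_div _ hm hmL]
    rfl
  have hrange : ∑ k ∈ Finset.range m, f k = (m / r : ℕ) * C.card := by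
    conv_lhs => rw [← Nat.mul_div_cancel' hrm, sum_range_mul_natCast_zmod, hsum, nsmul_eq_mul]
  have hmeas : MeasurableSet (Φ ⁻¹' C) := measurableSet_circleResidue_preimage _ _
  rw [← riemannSum_indicator hmeas, RiemannSum]
  simp only [hshift, hrange, Nat.cast_div hrm hr0]
  field_simp

end CircleResidue

section Rudin

variable {S : Finset ℕ} {δ : ℝ}

lemma floor_mul_div_mem_Icc {r : ℕ} (hr : 1 ≤ δ * r) :
    (⌊δ * r⌋₊ : ℝ) / r ∈ Icc (δ / 2) δ := by
  have hr0 : (0 : ℝ) < r := r.cast_nonneg.lt_of_ne' fun h => by norm_num [h] at hr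
  refine ⟨(le_div_iff₀ hr0).2 ?_, (div_le_iff₀ hr0).2 (Nat.floor_le (zero_le_one.trans hr))⟩
  linarith [Nat.div_two_lt_floor hr]

lemma exists_finset_zmod_card_div_mem_Icc {r : ℕ} (hδ : δ ≤ 1) (hr : 1 ≤ δ * r) :
    ∃ C : Finset (ZMod r), (C.card : ℝ) / r ∈ Icc (δ / 2) δ := by
  have : NeZero r := ⟨by rintro rfl; norm_num at hr⟩
  have hfloor : ⌊δ * r⌋₊ ≤ (Finset.univ : Finset (ZMod r)).card := by
    rw [Finset.card_univ, ZMod.card]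
    exact Nat.floor_le_of_le (mul_le_of_le_one_left r.cast_nonneg hδ)
  obtain ⟨C, -, hC⟩ := Finset.exists_subset_card_eq hfloor
  exact ⟨C, hC ▸ floor_mul_div_mem_Icc hr⟩

-- Members of `S` other than `m` shift the index of an arc of length `1 / lcm S` by a multiple of
-- `r = privatePart S m`, whereas `m` shifts it by multiples of a unit modulo `r`.
lemma exists_isEquidistributedSystem_riemannKernel (h0 : 0 ∉ S) (hδ : δ ≤ 1)
    (hS : ∀ m ∈ S, 1 ≤ δ * privatePart S m) : ∃ (U : S → Set Circle1) (η : S → ℝ),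
      IsEquidistributedSystem (fun m : S => riemannKernel m) U η ∧ ∀ m, η m ∈ Icc (δ / 2) δ := by
  have hpos (m : S) : 0 < (m : ℕ) := Nat.pos_of_ne_zero (ne_of_mem_of_not_mem m.2 h0)
  have hdvd (m : S) : (m : ℕ) ∣ S.lcm id := Finset.dvd_lcm (f := id) m.2
  choose C hC using fun m : S => exists_finset_zmod_card_div_mem_Icc hδ (hS m m.2)
  let Φ (m : S) := circleResidue ((privatePart_dvd (F := S)).trans (hdvd m))
  refine ⟨fun m => Φ m ⁻¹' C m, fun m => (C m).card / privatePart S m, ?_, hC⟩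
  constructor
  case measurableSet => exact fun m => measurableSet_circleResidue_preimage _ _
  case apply_self =>
    exact fun m x => riemannKernel_real_circleResidue_preimage (hpos m) privatePart_dvd (hdvd m)
      (coprime_lcm_div_privatePart m.2 (hpos m)) (C m) x
  case ae_mem_iff =>
    intro m m' hne x
    filter_upwards [ae_circleResidue_eq ((privatePart_dvd (F := S)).trans (hdvd m')) (hdvd m)
      (privatePart_dvd_lcm_div m'.2 m.2 (Subtype.coe_ne_coe.2 hne)) x] with y hy
    exact iff_of_eq (congrArg (· ∈ C m') hy)

lemma exists_sweeping_set_riemannKernel {ε : ℝ} (h0 : 0 ∉ S) (hδ : δ ∈ Ioo 0 1) (hε : 0 < ε)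
    (hS : ∀ m ∈ S, 1 ≤ δ * privatePart S m)
    (hcard : (Real.log δ⁻¹ + 1) / ε ≤ S.card * (δ / 2)) :
    ∃ A : Set Circle1, MeasurableSet A ∧ volume.real A ≤ ε ∧
      volume.real (sweptSet (fun m : S => riemannKernel m) (1 - δ) A)ᶜ ≤ δ := by
  have hne (m : S) : NeZero (m : ℕ) := ⟨ne_of_mem_of_not_mem m.2 h0⟩
  obtain ⟨U, η, hU, hη⟩ :=
    exists_isEquidistributedSystem_riemannKernel h0 hδ.2.le hS
  obtain ⟨E, hE, hE_pos, hswept⟩ := hU.exists_card_mul_measureReal_le_sweptSet (μ := volume)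
    (fun _ => invariant_convKernel) (half_pos hδ.1).le hη hδ.2
  refine exists_sweeping_set_of_mul_measureReal_le (fun _ => map_add_convKernel) hE hE_pos hδ hε ?_
  rw [Fintype.card_coe] at hswept
  exact le_trans (by gcongr) hswept

lemma hasSmallSweepingSets_riemannKernel {D : Set ℕ}
    (hD : ∀ n : ℕ, 1 ≤ n → ∃ F : Finset ℕ, (F : Set ℕ) ⊆ D ∧ F.card = n ∧ LcmIndependent F) :
    HasSmallSweepingSets riemannKernel (atTop ⊓ 𝓟 D) volume := by
  intro s hs δ hδ ε hε
  obtain ⟨N, hN⟩ := eventually_atTop.1 (mem_inf_principal.1 hs)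
  set r := max N ⌈δ⁻¹⌉₊
  have hr : 1 ≤ δ * r := by
    have hδr : δ⁻¹ ≤ r := (Nat.le_ceil _).trans (mod_cast le_max_right _ _)
    exact (inv_le_iff_one_le_mul₀' hδ.1).1 hδr
  obtain ⟨n, hn⟩ := exists_nat_ge ((Real.log δ⁻¹ + 1) / ε / (δ / 2))
  obtain ⟨F, hFD, hF_card, hF⟩ := hD (n + r + 2) (by lia)
  have h0F : 0 ∉ F := hF.zero_notMem (by lia)
  obtain ⟨S, hSF, hS_card, hS⟩ := hF.exists_subset_le_privatePart h0F r
  have h0S : 0 ∉ S := fun h => h0F (hSF h)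
  refine ⟨S, fun m hm => ?_, exists_sweeping_set_riemannKernel h0S hδ hε (fun m hm => ?_) ?_⟩
  · have hm0 : 0 < m := Nat.pos_of_ne_zero (ne_of_mem_of_not_mem hm h0S)
    have hrm : r ≤ m := (hS m hm).trans (Nat.le_of_dvd hm0 privatePart_dvd)
    exact hN m ((le_max_left _ _).trans hrm) (hFD (hSF hm))
  · exact hr.trans (mul_le_mul_of_nonneg_left (mod_cast hS m hm) hδ.1.le)
  · have hnS : n ≤ S.card := by lia
    refine ((div_le_iff₀ (half_pos hδ.1)).1 hn).trans ?_
    have := hδ.1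
    gcongr

end Rudin

end

/-- **Rudin's theorem (strong sweeping out form).** Suppose `D ⊆ ℕ` contains, for every
`n`, a set `D_n` of `n` elements none of which divides the least common multiple of the
others. Then the Riemann sums `(R_n)_{n ∈ D}` are strong sweeping out: for every `ε > 0`
there is a set `E` with `|E| < ε`, `limsup_{n→∞, n∈D} R_n 𝟙_E = 1` a.e. and
`liminf_{n→∞, n∈D} R_n 𝟙_E = 0` a.e. -/
theorem rudin_strong_sweeping_out
    (D : Set ℕ)
    (hD : ∀ n : ℕ, 1 ≤ n → ∃ F : Finset ℕ, (F : Set ℕ) ⊆ D ∧ F.card = n ∧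
      ∀ m ∈ F, ¬ m ∣ (F.erase m).lcm id) :
    ∀ ε : ℝ, 0 < ε →
      ∃ E : Set Circle1, MeasurableSet E ∧ volume E < ENNReal.ofReal ε ∧
        (∀ᵐ x : Circle1,
          limsup (fun n => RiemannSum n (E.indicator fun _ => (1:ℝ)) x)
            (atTop ⊓ Filter.principal D) = 1) ∧
        (∀ᵐ x : Circle1,
          liminf (fun n => RiemannSum n (E.indicator fun _ => (1:ℝ)) x)
            (atTop ⊓ Filter.principal D) = 0) := by
  intro ε hε
  obtain ⟨E, hE, hμE, hlimsup, hliminf⟩ :=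
    (hasSmallSweepingSets_riemannKernel hD).isStrongSweepingOut
      (fun _ => bind_convKernel_le) ε hε
  simp only [← riemannSum_indicator hE] at hlimsup hliminf
  exact ⟨E, hE, hμE, hlimsup, hliminf⟩
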